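/- Let G be a group and π a set of primes. Let A and B be ℤG-modules, and for each n ≥ 0 regard Tor_n^ℤ(A,B) as a ℤG-module via the diagonal G-action. If A and B belong to the class 𝔠(G,π), then Tor_n^ℤ(A,B) belongs to 𝔠(G,π) for all n ≥ 0. -/

import Mathlib

/-!
Statement 14: the class 𝔠(G, π) is closed under torsion products over ℤ.
Here Tor_n^ℤ(A, B), regarded as a ℤG-module via the diagonal G-action, is the
Tor object of the monoidal abelian category Rep ℤ G (whose monoidal structure is
the tensor product over ℤ with the diagonal action; since projective objects of
Rep ℤ G are flat over ℤ, this left-derived tensor product computes Tor over ℤ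
with the diagonal action).
-/

open CategoryTheory

noncomputable section




/-- The rational circle `ℚ/ℤ`. -/
abbrev RatCircle : Type := ℚ ⧸ AddSubgroup.zmultiples (1 : ℚ)

/-- The quasicyclic (Prüfer) `p`-group, realized as the `p`-primary part of `ℚ/ℤ`. -/
def pruferSubgroup (p : ℕ) : AddSubgroup RatCircle where
  carrier := {x | ∃ n : ℕ, (p ^ n : ℕ) • x = 0}
  zero_mem' := ⟨0, smul_zero _⟩
  add_mem' := by
    rintro a b ⟨m, hm⟩ ⟨n, hn⟩
    refine ⟨m + n, ?_⟩
    have ha : (p ^ m * p ^ n) • a = 0 := by rw [mul_comm, mul_smul, hm, smul_zero]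
    have hb : (p ^ m * p ^ n) • b = 0 := by rw [mul_smul, hn, smul_zero]
    rw [smul_add, pow_add, ha, hb, add_zero]
  neg_mem' := by
    rintro a ⟨m, hm⟩
    exact ⟨m, by rw [smul_neg, hm, neg_zero]⟩

/-- A group has a quasicyclic `p`-section if some quotient of a subgroup is
isomorphic to the Prüfer `p`-group. -/
def HasQuasicyclicSection (G : Type*) [Group G] (p : ℕ) : Prop :=
  ∃ (H : Subgroup G) (K : Subgroup H) (_ : K.Normal),
    Nonempty ((H ⧸ K) ≃* Multiplicative (pruferSubgroup p))

/-- The spectrum of a group: the set of primes `p` such that the group has a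
section isomorphic to the quasicyclic `p`-group. -/
def groupSpectrum (G : Type*) [Group G] : Set ℕ :=
  {p | p.Prime ∧ HasQuasicyclicSection G p}

/-- The spectrum of an (additive) abelian group, via `Multiplicative`. -/
abbrev addSpectrum (A : Type*) [AddGroup A] : Set ℕ :=
  groupSpectrum (Multiplicative A)

/-- An abelian group has finite rank if its torsion-free rank and all of its
`p`-ranks are finite. -/
def FiniteRankAbelian (A : Type*) [AddCommGroup A] : Prop :=
  (∃ n : ℕ, ∀ k : ℕ, (∃ f : (Fin k →₀ ℤ) →+ A, Function.Injective f) → k ≤ n) ∧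
  ∀ p : ℕ, p.Prime → {a : A | (p : ℕ) • a = 0}.Finite

/-- A group has finite rank (in the sense appropriate for abelian groups:
finite torsion-free rank and finite `p`-ranks). -/
def FiniteRankGroup (G : Type*) [Group G] : Prop :=
  (∃ n : ℕ, ∀ k : ℕ,
    (∃ f : Multiplicative (Fin k →₀ ℤ) →* G, Function.Injective f) → k ≤ n) ∧
  ∀ p : ℕ, p.Prime → {g : G | g ^ p = 1}.Finite

/-- A solvable group of finite rank: a solvable group all of whose abelian
sections have finite rank. -/
def SolvableOfFiniteRank (G : Type*) [Group G] : Prop :=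
  IsSolvable G ∧
    ∀ (H : Subgroup G) (K : Subgroup H) (_ : K.Normal),
      (∀ x y : H ⧸ K, x * y = y * x) → FiniteRankGroup (H ⧸ K)

/-- A group is virtually abelian. -/
def VirtuallyAbelian (G : Type*) [Group G] : Prop :=
  ∃ H : Subgroup G, H.index ≠ 0 ∧ ∀ x y : H, x * y = y * x

/-- A `ℤG`-module (given as an object of `Rep ℤ G`) whose underlying abelian group
is torsion-free, of finite rank, and `π`-spectral. -/
def NiceRep {G : Type} [Group G] (π : Set ℕ) (M : Rep.{0} ℤ G) : Prop :=
  (∀ g : M, g ≠ 0 → ¬IsOfFinAddOrder g) ∧ FiniteRankAbelian M ∧ addSpectrum M ⊆ π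

/-- The class `𝒰` of solvable groups of finite rank. -/
def MemClassU (G : Type) [Group G] : Prop :=
  SolvableOfFiniteRank G ∧
  ∃ (N : Subgroup G) (_ : N.Normal),
    Group.IsNilpotent N ∧
    Group.FG (G ⧸ N) ∧ VirtuallyAbelian (G ⧸ N) ∧
    ∃ (r : ℕ) (T : Fin (r + 1) → Subgroup G),
      Monotone T ∧ T 0 = ⊥ ∧
      ((T (Fin.last r) : Set G) = {g : G | g ∈ N ∧ IsOfFinOrder g}) ∧
      (∀ (i : Fin (r + 1)) (g t : G), t ∈ T i → g * t * g⁻¹ ∈ T i) ∧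
      (∀ (i : Fin r) (n t : G), n ∈ N → t ∈ T i.succ →
        n * t * n⁻¹ * t⁻¹ ∈ T i.castSucc) ∧
      (∀ i : Fin r, (T i.castSucc).relIndex (T i.succ) = 0 →
        ∃ M : Rep ℤ (G ⧸ N), NiceRep (groupSpectrum G) M ∧
          ∃ φ : M → G,
            (∀ m : M, φ m ∈ T i.succ) ∧
            (∀ m m' : M, (φ (m + m'))⁻¹ * (φ m * φ m') ∈ T i.castSucc) ∧
            (∀ t : G, t ∈ T i.succ → ∃ m : M, (φ m)⁻¹ * t ∈ T i.castSucc) ∧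
            (∀ (g : G) (m : M),
              (φ (M.ρ (QuotientGroup.mk g) m))⁻¹ * (g * φ m * g⁻¹) ∈ T i.castSucc))

/-- The class `𝔠(G, π)`: the smallest class of `ℤG`-modules containing every
finite `ℤG`-module and every `ℤG`-module whose underlying abelian group is
torsion-free of finite rank and `π`-spectral, and closed under forming
`ℤG`-module quotients and extensions. -/
inductive MemC (G : Type) [Group G] (π : Set ℕ) : Rep ℤ G → Prop
  | of_finite (A : Rep ℤ G) (h : Finite (A : Type)) : MemC G π A
  | of_nice (A : Rep ℤ G) (h : NiceRep π A) : MemC G π A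
  | quot (A B : Rep ℤ G) (f : A ⟶ B) (hf : Function.Surjective f.hom)
      (hA : MemC G π A) : MemC G π B
  | ext (A B C : Rep ℤ G) (f : A ⟶ B) (g : B ⟶ C)
      (hinj : Function.Injective f.hom) (hsurj : Function.Surjective g.hom)
      (hexact : ∀ b : (B : Type), g.hom b = 0 ↔ ∃ a : (A : Type), f.hom a = b)
      (hA : MemC G π A) (hC : MemC G π C) : MemC G π B

/-!
Torsion-freeness, finite rank and `π`-spectrality of an abelian group `A` amount to flatness over
`ℤ`, finiteness of `ℚ ⊗ A` over `ℚ`, and finiteness of `ℤ_p ⊗ A` over the `p`-adic integers for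
every prime `p ∉ π`: embed `A` in some `ℚⁿ`; if `A` has no Prüfer `p`-section, the denominators of
its coordinates have bounded `p`-part. Hence such modules are stable under submodules and tensor
products. A finite module is a quotient of a permutation module, so they generate `𝔠(G, π)` under
quotients and extensions, and it follows that `𝔠(G, π)` is a Serre class.

If `A` is one of these generators, then `A ⊗ -` is exact, so `Tor_n(A, B)` vanishes for `n > 0`,
and `A ⊗ B` lies in the class for all `B` in it, by induction on `B`. For general `A` the claim
follows from the long exact sequence of `Tor(-, B)`, by induction on `n` and on the construction of
`A`: for a quotient `A / K` the term `Tor_{n+1}(A / K, B)` lies between `Tor_{n+1}(A, B)` and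
`Tor_n(K, B)`, and `K` is again in the class.
-/

open scoped TensorProduct

section BaseChange

variable {R : Type*} [CommRing R] (S : Type*) [CommRing S] [Algebra R S]
  {M N : Type*} [AddCommGroup M] [Module R M] [AddCommGroup N] [Module R N]

lemma finite_baseChange_of_injective [IsNoetherianRing S] [Module.Flat R S]
    [Module.Finite S (S ⊗[R] N)] (f : M →ₗ[R] N) (hf : Function.Injective f) :
    Module.Finite S (S ⊗[R] M) :=
  .of_injective (f.baseChange S) (Module.Flat.lTensor_preserves_injective_linearMap f hf)

lemma finite_baseChange_of_surjective [Module.Finite S (S ⊗[R] M)] (f : M →ₗ[R] N)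
    (hf : Function.Surjective f) : Module.Finite S (S ⊗[R] N) :=
  .of_surjective (f.baseChange S) (LinearMap.lTensor_surjective S hf)

lemma finite_baseChange_pi {ι : Type*} [Finite ι] (M : ι → Type*) [∀ i, AddCommGroup (M i)]
    [∀ i, Module R (M i)] [∀ i, Module.Finite S (S ⊗[R] M i)] :
    Module.Finite S (S ⊗[R] ∀ i, M i) := by
  classical
  have := Fintype.ofFinite ι
  exact .equiv (TensorProduct.piRight R S S M).symm

lemma finite_baseChange_tensorProduct [Module.Finite S (S ⊗[R] M)]
    [Module.Finite S (S ⊗[R] N)] : Module.Finite S (S ⊗[R] (M ⊗[R] N)) :=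
  .equiv (TensorProduct.AlgebraTensorModule.distribBaseChange R S M N).symm

lemma finite_baseChange_of_isUnit_smul_mem {F : Submodule R M} (hF : F.FG)
    (h : ∀ x, ∃ r : R, IsUnit (algebraMap R S r) ∧ r • x ∈ F) :
    Module.Finite S (S ⊗[R] M) := by
  have : Module.Finite R F := .of_fg hF
  refine .of_surjective (F.subtype.baseChange S) (LinearMap.range_eq_top.1 ?_)
  rw [← top_le_iff]
  rintro y -
  induction y with
  | zero => exact zero_mem _
  | add y z hy hz => exact add_mem hy hz
  | tmul s x =>
    obtain ⟨r, ⟨u, hu⟩, hx⟩ := h x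
    refine ⟨(↑u⁻¹ * s) ⊗ₜ ⟨r • x, hx⟩, ?_⟩
    have hs : r • ((↑u⁻¹ : S) * s) = s := by rw [Algebra.smul_def, ← hu, u.mul_inv_cancel_left]
    rw [LinearMap.baseChange_tmul, Submodule.subtype_apply, ← TensorProduct.smul_tmul, hs]

lemma subsingleton_baseChange_of_smul_surjective [hfin : Module.Finite S (S ⊗[R] M)] {r : R}
    (hr : algebraMap R S r ∈ (⊥ : Ideal S).jacobson) (h : ∀ x : M, ∃ y : M, r • y = x) :
    Subsingleton (S ⊗[R] M) := by
  let I := Ideal.span {algebraMap R S r}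
  have hle : ⊤ ≤ I • (⊤ : Submodule S (S ⊗[R] M)) := by
    rintro y -
    induction y with
    | zero => exact zero_mem _
    | add y z hy hz => exact add_mem hy hz
    | tmul s x =>
      obtain ⟨y, rfl⟩ := h x
      rw [TensorProduct.tmul_smul, ← algebraMap_smul S r]
      exact Submodule.smul_mem_smul (Ideal.mem_span_singleton_self _) Submodule.mem_top
  have hbot : (⊤ : Submodule S (S ⊗[R] M)) = ⊥ :=
    Submodule.eq_bot_of_le_smul_of_le_jacobson_bot I ⊤ hfin.fg_top hle
      ((Ideal.span_singleton_le_iff_mem _).2 hr)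
  exact (Submodule.subsingleton_iff S).1 (subsingleton_of_bot_eq_top hbot.symm)

lemma exists_injective_pi_of_finite_baseChange (K : Type*) [Field K] [Algebra R K]
    [FaithfulSMul R K] [Module.Flat R M] [Module.Finite K (K ⊗[R] M)] :
    ∃ (n : ℕ) (f : M →ₗ[R] Fin n → K), Function.Injective f :=
  let e := (Module.finBasis K (K ⊗[R] M)).equivFun
  ⟨_, (e.toLinearMap.restrictScalars R).comp (TensorProduct.mk R K M 1),
    e.injective.comp (Module.Flat.tensorProduct_mk_injective R M K)⟩

end BaseChange

section Prufer

lemma mem_addSpectrum_iff {A : Type*} [AddCommGroup A] {p : ℕ} :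
    p ∈ addSpectrum A ↔ p.Prime ∧
      ∃ (K : AddSubgroup A) (φ : K →+ pruferSubgroup p), Function.Surjective φ := by
  refine and_congr_right fun _ => ⟨?_, ?_⟩
  · rintro ⟨H, N, _, ⟨e⟩⟩
    let Φ : H →* Multiplicative (pruferSubgroup p) := e.toMonoidHom.comp (QuotientGroup.mk' N)
    exact ⟨Subgroup.toAddSubgroup' H, AddMonoidHom.toMultiplicative.symm Φ,
      e.surjective.comp (QuotientGroup.mk'_surjective N)⟩
  · rintro ⟨K, φ, hφ⟩
    let Φ : AddSubgroup.toSubgroup K →* Multiplicative (pruferSubgroup p) :=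
      AddMonoidHom.toMultiplicative φ
    exact ⟨_, Φ.ker, inferInstance, ⟨QuotientGroup.quotientKerEquivOfSurjective Φ hφ⟩⟩

lemma mem_addSpectrum_of_le_range {A : Type*} [AddCommGroup A] {p : ℕ} (hp : p.Prime)
    (ψ : A →+ RatCircle) (h : pruferSubgroup p ≤ ψ.range) : p ∈ addSpectrum A := by
  refine mem_addSpectrum_iff.2 ⟨hp, (pruferSubgroup p).comap ψ,
    ψ.addSubgroupComap (pruferSubgroup p), fun x => ?_⟩
  obtain ⟨a, ha⟩ := h x.2
  exact ⟨⟨a, by simp [ha]⟩, Subtype.ext ha⟩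

variable {p : ℕ}

lemma mk_mem_pruferSubgroup_iff {q : ℚ} :
    (q : RatCircle) ∈ pruferSubgroup p ↔ ∃ (n : ℕ) (m : ℤ), (p : ℚ) ^ n * q = m := by
  refine exists_congr fun n => ?_
  rw [← QuotientAddGroup.mk_nsmul, QuotientAddGroup.eq_zero_iff, AddSubgroup.mem_zmultiples_iff]
  simp [eq_comm]

lemma pruferSubgroup_le_map_mk {H : AddSubgroup ℚ} (hp : p.Prime)
    (h : ∀ n : ℕ, ∃ x ∈ H, p ^ n ∣ x.den) :
    pruferSubgroup p ≤ H.map (QuotientAddGroup.mk' (.zmultiples 1)) := by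
  intro y
  induction y using QuotientAddGroup.induction_on with | H q
  intro hq
  obtain ⟨n, m, hm⟩ := mk_mem_pruferSubgroup_iff.1 hq
  obtain ⟨x, hx, v, hv⟩ := h n
  obtain ⟨s, t, hst⟩ : IsCoprime x.num ((p ^ n : ℕ) : ℤ) :=
    (Rat.isCoprime_num_den x).of_isCoprime_of_dvd_right (by rw [hv]; simp)
  have hpn : (p : ℚ) ^ n ≠ 0 := pow_ne_zero n (Nat.cast_ne_zero.2 hp.ne_zero)
  have hvx : (p : ℚ) ^ n * (v * x) = x.num := by
    rw [← mul_assoc, ← Rat.den_mul_eq_num, hv]; push_cast; rfl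
  have hst' : (s : ℚ) * x.num + t * p ^ n = 1 := mod_cast hst
  refine ⟨(m * s * v : ℤ) • x, zsmul_mem hx _, ?_⟩
  rw [QuotientAddGroup.mk'_apply, QuotientAddGroup.eq]
  refine AddSubgroup.mem_zmultiples_iff.2 ⟨m * t, mul_left_cancel₀ hpn ?_⟩
  push_cast [zsmul_eq_mul]
  linear_combination m * hst' + m * s * hvx - hm

lemma divisible_pruferSubgroup (hp : p.Prime) (x : pruferSubgroup p) :
    ∃ y : pruferSubgroup p, p • y = x := by
  obtain ⟨x, hx⟩ := x
  induction x using QuotientAddGroup.induction_on with | H q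
  obtain ⟨n, m, hm⟩ := mk_mem_pruferSubgroup_iff.1 hx
  have hp0 : (p : ℚ) ≠ 0 := Nat.cast_ne_zero.2 hp.ne_zero
  have hpq : p * (q / p) = q := mul_div_cancel₀ q hp0
  refine ⟨⟨(q / p : ℚ), mk_mem_pruferSubgroup_iff.2 ⟨n + 1, m, ?_⟩⟩, Subtype.ext ?_⟩
  · rw [pow_succ, mul_assoc, hpq, hm]
  · change p • ((q / p : ℚ) : RatCircle) = q
    rw [← QuotientAddGroup.mk_nsmul, nsmul_eq_mul, hpq]

lemma exists_injective_zmod_pruferSubgroup (hp : p.Prime) :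
    ∃ f : ZMod p →+ pruferSubgroup p, Function.Injective f := by
  have hp0 : (p : ℚ) ≠ 0 := Nat.cast_ne_zero.2 hp.ne_zero
  let x : pruferSubgroup p :=
    ⟨((p : ℚ)⁻¹ : ℚ), mk_mem_pruferSubgroup_iff.2 ⟨1, 1, by simp [hp0]⟩⟩
  have hx (n : ℤ) : n • x = 0 ↔ (p : ℤ) ∣ n := by
    change n • (⟨_, _⟩ : pruferSubgroup p) = 0 ↔ _
    rw [Subtype.ext_iff, AddSubgroup.coe_zsmul, AddSubgroup.coe_zero, ← QuotientAddGroup.mk_zsmul,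
      QuotientAddGroup.eq_zero_iff, AddSubgroup.mem_zmultiples_iff]
    refine exists_congr fun k => ?_
    rw [zsmul_one, zsmul_eq_mul, ← div_eq_mul_inv, eq_div_iff hp0, mul_comm, eq_comm]
    exact_mod_cast Iff.rfl
  refine ⟨ZMod.lift p ⟨zmultiplesHom _ x, (hx p).2 dvd_rfl⟩,
    (ZMod.lift_injective _).2 fun n hn => ?_⟩
  exact (ZMod.intCast_zmod_eq_zero_iff_dvd n p).2 ((hx n).1 hn)

end Prufer

section SpectrumAndPadics

variable {p : ℕ} [hp : Fact p.Prime]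

lemma finite_padicInt_tensorProduct_of_not_pow_dvd_den {H : Submodule ℤ ℚ} {n : ℕ}
    (h : ∀ x ∈ H, ¬p ^ n ∣ x.den) : Module.Finite ℤ_[p] (ℤ_[p] ⊗[ℤ] H) := by
  have hp0 : (p : ℚ) ≠ 0 := Nat.cast_ne_zero.2 hp.out.ne_zero
  let F : Submodule ℤ ℚ := Submodule.span ℤ {((p : ℚ) ^ n)⁻¹}
  have hF : (F.comap H.subtype).FG :=
    Submodule.fg_of_fg_map_injective _ H.subtype_injective
      ((Submodule.fg_span_singleton _).of_le (Submodule.map_comap_le _ _))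
  refine finite_baseChange_of_isUnit_smul_mem _ hF fun ⟨x, hx⟩ => ?_
  obtain ⟨k, m, hm, hxm⟩ := Nat.exists_eq_pow_mul_and_not_dvd x.den_ne_zero p hp.out.ne_one
  have hkn : k ≤ n := le_of_not_ge fun hnk =>
    h x hx (hxm ▸ (pow_dvd_pow p hnk).trans (dvd_mul_right _ _))
  refine ⟨m, ?_, Submodule.mem_span_singleton.2 ⟨x.num * p ^ (n - k), ?_⟩⟩
  · rw [eq_intCast, PadicInt.isUnit_iff]
    refine (PadicInt.norm_le_one _).antisymm (not_lt.1 fun hlt => hm ?_)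
    exact Int.natCast_dvd_natCast.1 ((PadicInt.norm_int_lt_one_iff_dvd _).1 hlt)
  · have hnum : (p : ℚ) ^ k * (m * x) = x.num := by
      rw [← mul_assoc, ← Rat.den_mul_eq_num, hxm]; push_cast; rfl
    have hpow : (p : ℚ) ^ n = p ^ (n - k) * p ^ k := by rw [← pow_add, Nat.sub_add_cancel hkn]
    simp only [zsmul_eq_mul, Submodule.subtype_apply, Submodule.coe_smul]
    push_cast
    rw [← div_eq_mul_inv, div_eq_iff (pow_ne_zero n hp0), ← hnum, hpow]
    ring

lemma finite_padicInt_tensorProduct_of_notMem_addSpectrum {A : Type*} [AddCommGroup A]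
    [Module.Flat ℤ A] [Module.Finite ℚ (ℚ ⊗[ℤ] A)] (h : p ∉ addSpectrum A) :
    Module.Finite ℤ_[p] (ℤ_[p] ⊗[ℤ] A) := by
  obtain ⟨n, f, hf⟩ := exists_injective_pi_of_finite_baseChange (R := ℤ) (M := A) ℚ
  let ψ (i : Fin n) : A →ₗ[ℤ] ℚ := LinearMap.proj i ∘ₗ f
  have (i : Fin n) : Module.Finite ℤ_[p] (ℤ_[p] ⊗[ℤ] LinearMap.range (ψ i)) := by
    obtain ⟨m, hm⟩ : ∃ m : ℕ, ∀ x ∈ LinearMap.range (ψ i), ¬p ^ m ∣ x.den := by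
      by_contra! hden
      refine h (mem_addSpectrum_of_le_range hp.out
        ((QuotientAddGroup.mk' (.zmultiples 1)).comp (ψ i).toAddMonoidHom) ?_)
      rw [AddMonoidHom.range_comp]
      exact pruferSubgroup_le_map_mk hp.out hden
    exact finite_padicInt_tensorProduct_of_not_pow_dvd_den hm
  have := finite_baseChange_pi (R := ℤ) ℤ_[p] fun i => LinearMap.range (ψ i)
  exact finite_baseChange_of_injective _ (LinearMap.pi fun i => (ψ i).rangeRestrict)
    fun x y hxy => hf (funext fun i => congrArg Subtype.val (congrFun hxy i))

variable (p) in
lemma nontrivial_padicInt_tensorProduct_zmod : Nontrivial (ℤ_[p] ⊗[ℤ] ZMod p) := by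
  let μ : ℤ_[p] ⊗[ℤ] ZMod p →ₗ[ℤ] ZMod p :=
    TensorProduct.lift ((LinearMap.mul ℤ (ZMod p)).comp PadicInt.toZMod.toIntAlgHom.toLinearMap)
  have hμ (x : ZMod p) : μ (1 ⊗ₜ x) = x := by
    change PadicInt.toZMod 1 * x = x
    rw [map_one, one_mul]
  exact Function.Surjective.nontrivial fun x => ⟨_, hμ x⟩

-- By divisibility the base change is `p`-divisible, so Nakayama's lemma would make it vanish.
lemma not_finite_padicInt_tensorProduct_pruferSubgroup :
    ¬Module.Finite ℤ_[p] (ℤ_[p] ⊗[ℤ] pruferSubgroup p) := by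
  intro _
  have hpj : algebraMap ℤ ℤ_[p] p ∈ (⊥ : Ideal ℤ_[p]).jacobson := by
    rw [IsLocalRing.jacobson_eq_maximalIdeal _ bot_ne_top, PadicInt.maximalIdeal_eq_span_p]
    simp
  have : Subsingleton (ℤ_[p] ⊗[ℤ] pruferSubgroup p) :=
    subsingleton_baseChange_of_smul_surjective ℤ_[p] hpj
      (by simpa using divisible_pruferSubgroup hp.out)
  obtain ⟨f, hf⟩ := exists_injective_zmod_pruferSubgroup hp.out
  have := nontrivial_padicInt_tensorProduct_zmod p
  exact not_subsingleton (ℤ_[p] ⊗[ℤ] ZMod p) (Module.Flat.lTensor_preserves_injective_linearMap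
    (M := ℤ_[p]) f.toIntLinearMap hf).subsingleton

lemma notMem_addSpectrum_of_finite_padicInt_tensorProduct {A : Type*} [AddCommGroup A]
    [Module.Finite ℤ_[p] (ℤ_[p] ⊗[ℤ] A)] : p ∉ addSpectrum A := by
  intro h
  obtain ⟨-, K, φ, hφ⟩ := mem_addSpectrum_iff.1 h
  have := finite_baseChange_of_injective ℤ_[p] K.subtype.toIntLinearMap Subtype.val_injective
  exact not_finite_padicInt_tensorProduct_pruferSubgroup
    (finite_baseChange_of_surjective ℤ_[p] φ.toIntLinearMap hφ)

end SpectrumAndPadics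

section FiniteRank

lemma lt_aleph0_iff_exists_forall_natCast_le {c : Cardinal} :
    c < Cardinal.aleph0 ↔ ∃ n : ℕ, ∀ k : ℕ, (k : Cardinal) ≤ c → k ≤ n := by
  rw [Cardinal.lt_aleph0]
  refine ⟨?_, ?_⟩
  · rintro ⟨n, rfl⟩
    exact ⟨n, fun k => Nat.cast_le.1⟩
  · rintro ⟨n, hn⟩
    by_contra! h
    have hc : Cardinal.aleph0 ≤ c := not_lt.1 fun hlt => (Cardinal.lt_aleph0.1 hlt).elim h
    exact n.lt_irrefl (hn (n + 1) (Cardinal.natCast_le_aleph0.trans hc))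

lemma finite_rat_tensorProduct_iff {A : Type*} [AddCommGroup A] :
    Module.Finite ℚ (ℚ ⊗[ℤ] A) ↔
      ∃ n : ℕ, ∀ k : ℕ, (∃ f : (Fin k →₀ ℤ) →+ A, Function.Injective f) → k ≤ n := by
  have hrank (k : ℕ) : (k : Cardinal) ≤ Module.rank ℤ A ↔
      ∃ f : (Fin k →₀ ℤ) →+ A, Function.Injective f := by
    rw [Module.le_rank_iff_exists_linearMap]
    let e := Finsupp.linearEquivFunOnFinite ℤ ℤ (Fin k)
    exact ⟨fun ⟨f, hf⟩ => ⟨(f ∘ₗ e.toLinearMap).toAddMonoidHom, hf.comp e.injective⟩,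
      fun ⟨f, hf⟩ => ⟨f.toIntLinearMap ∘ₗ e.symm.toLinearMap, hf.comp e.symm.injective⟩⟩
  rw [← Module.rank_lt_aleph0_iff, (TensorProduct.isBaseChange ℤ A ℚ).rank_eq,
    lt_aleph0_iff_exists_forall_natCast_le]
  simp only [hrank]

lemma flat_int_iff {A : Type*} [AddCommGroup A] [Module ℤ A] :
    Module.Flat ℤ A ↔ ∀ a : A, a ≠ 0 → ¬IsOfFinAddOrder a := by
  obtain rfl : ‹Module ℤ A› = AddCommGroup.toIntModule A := Subsingleton.elim _ _
  rw [← isAddTorsionFree_iff_not_isOfFinAddOrder, ← Module.isTorsionFree_int_iff_isAddTorsionFree]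
  exact ⟨fun _ => Module.Flat.isTorsionFree, fun _ => inferInstance⟩

lemma finiteRankAbelian_iff {A : Type*} [AddCommGroup A] [Module.Flat ℤ A] :
    FiniteRankAbelian A ↔ Module.Finite ℚ (ℚ ⊗[ℤ] A) := by
  have htors (p : ℕ) (hp : p.Prime) : {a : A | p • a = 0}.Finite :=
    (Set.finite_singleton 0).subset fun a ha => by_contra fun hne =>
      flat_int_iff.1 ‹_› a hne (isOfFinAddOrder_iff_nsmul_eq_zero.2 ⟨p, hp.pos, ha⟩)
  rw [finite_rat_tensorProduct_iff]
  exact and_iff_left htors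

lemma addSpectrum_subset_iff {A : Type*} [AddCommGroup A] [Module.Flat ℤ A]
    [Module.Finite ℚ (ℚ ⊗[ℤ] A)] {π : Set ℕ} :
    addSpectrum A ⊆ π ↔
      ∀ (p : ℕ) [Fact p.Prime], p ∉ π → Module.Finite ℤ_[p] (ℤ_[p] ⊗[ℤ] A) := by
  refine ⟨fun h p _ hp => finite_padicInt_tensorProduct_of_notMem_addSpectrum fun hA => hp (h hA),
    fun h p hA => by_contra fun hp => ?_⟩
  have : Fact p.Prime := ⟨hA.1⟩
  have := h p hp
  exact notMem_addSpectrum_of_finite_padicInt_tensorProduct hA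

/-- The abelian group `A` is torsion-free of finite rank and `π`-spectral. Each of the three
properties is encoded as a property of a base change, since in this form they pass to tensor
products. -/
structure IsNice (π : Set ℕ) (A : Type*) [AddCommGroup A] : Prop where
  flat : Module.Flat ℤ A
  finite_rat : Module.Finite ℚ (ℚ ⊗[ℤ] A)
  finite_padicInt (p : ℕ) [Fact p.Prime] : p ∉ π → Module.Finite ℤ_[p] (ℤ_[p] ⊗[ℤ] A)

namespace IsNice

variable {π : Set ℕ} {A B : Type*} [AddCommGroup A] [AddCommGroup B]

lemma of_injective (hB : IsNice π B) (f : A →+ B) (hf : Function.Injective f) :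
    IsNice π A where
  flat := flat_int_iff.2 fun a ha h => flat_int_iff.1 hB.flat (f a)
    ((map_ne_zero_iff f hf).2 ha) (f.isOfFinAddOrder h)
  finite_rat :=
    have := hB.finite_rat
    finite_baseChange_of_injective ℚ f.toIntLinearMap hf
  finite_padicInt p _ hp :=
    have := hB.finite_padicInt p hp
    finite_baseChange_of_injective ℤ_[p] f.toIntLinearMap hf

-- The `ℤ`-actions are arbitrary because those of a representation are not the canonical ones.
lemma tensorProduct [Module ℤ A] [Module ℤ B] (hA : IsNice π A) (hB : IsNice π B) :
    IsNice π (A ⊗[ℤ] B) := by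
  obtain rfl : ‹Module ℤ A› = AddCommGroup.toIntModule A := Subsingleton.elim _ _
  obtain rfl : ‹Module ℤ B› = AddCommGroup.toIntModule B := Subsingleton.elim _ _
  have hsub : AddCommGroup.toIntModule (A ⊗[ℤ] B) = TensorProduct.leftModule :=
    Subsingleton.elim _ _
  obtain ⟨_, _, hA⟩ := hA
  obtain ⟨_, _, hB⟩ := hB
  refine ⟨?_, ?_, fun p _ hp => ?_⟩ <;> rw [hsub]
  · infer_instance
  · exact finite_baseChange_tensorProduct ℚ
  · have := hA p hp
    have := hB p hp
    exact finite_baseChange_tensorProduct ℤ_[p]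

lemma of_finite [Module.Flat ℤ A] [Module.Finite ℤ A] : IsNice π A :=
  ⟨‹_›, inferInstance, fun _ _ _ => inferInstance⟩

end IsNice

lemma niceRep_iff {G : Type} [Group G] {π : Set ℕ} {M : Rep.{0} ℤ G} :
    NiceRep π M ↔ IsNice π M := by
  refine ⟨fun ⟨htf, hrank, hspec⟩ => ?_, fun ⟨_, _, hloc⟩ => ?_⟩
  · have := flat_int_iff.2 htf
    have := finiteRankAbelian_iff.1 hrank
    exact ⟨‹_›, ‹_›, addSpectrum_subset_iff.1 hspec⟩
  · exact ⟨flat_int_iff.1 ‹_›, finiteRankAbelian_iff.2 ‹_›, addSpectrum_subset_iff.2 hloc⟩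

end FiniteRank

open MonoidalCategory Limits

universe v u

section Kernel

variable {C : Type*} [Category* C] [Abelian C] {X Y : C}

lemma shortExact_kernel_of_epi (f : X ⟶ Y) [Epi f] : (ShortComplex.kernelSequence f).ShortExact :=
  { exact := ShortComplex.kernelSequence_exact f
    epi_g := ‹Epi f› }

lemma shortExact_kernel_image (f : X ⟶ Y) :
    (ShortComplex.mk (kernel.ι f) (factorThruImage f)
      (comp_factorThruImage_eq_zero (kernel.condition f))).ShortExact where
  exact := by
    let φ : ShortComplex.mk (kernel.ι f) (factorThruImage f)
        (comp_factorThruImage_eq_zero (kernel.condition f)) ⟶ .mk (kernel.ι f) f (by simp) :=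
      { τ₁ := 𝟙 _, τ₂ := 𝟙 _, τ₃ := image.ι f }
    exact (ShortComplex.exact_iff_of_epi_of_isIso_of_mono φ).2 (ShortComplex.exact_kernel f)

end Kernel

section Tor

variable {C : Type u} [Category.{v} C] [Abelian C] [MonoidalCategory C] [MonoidalPreadditive C]

/-- The functor `- ⊗ K` for a chain complex `K`: its homology on a projective resolution of `B`
is `Tor(-, B)`. -/
@[simps]
def tensorComplex (K : ChainComplex C ℕ) : C ⥤ ChainComplex C ℕ where
  obj A := ((tensorLeft A).mapHomologicalComplex _).obj K
  map f := (NatTrans.mapHomologicalComplex ((tensoringLeft C).map f) _).app K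

instance (K : ChainComplex C ℕ) : (tensorComplex K).PreservesZeroMorphisms where
  map_zero _ _ := HomologicalComplex.hom_ext _ _ fun i => (tensorRight (K.X i)).map_zero _ _

lemma shortExact_map_tensorComplex {S : ShortComplex C} (hS : S.ShortExact)
    (K : ChainComplex C ℕ) [∀ i, PreservesFiniteLimits (tensorRight (K.X i))]
    [∀ i, PreservesFiniteColimits (tensorRight (K.X i))] :
    (S.map (tensorComplex K)).ShortExact :=
  HomologicalComplex.shortExact_of_degreewise_shortExact _ fun i =>
    hS.map_of_exact (tensorRight (K.X i))

variable [HasProjectiveResolutions C]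

lemma isZero_tor_succ_of_preservesFiniteLimits (A B : C) (n : ℕ)
    [PreservesFiniteLimits (tensorLeft A)] [PreservesFiniteColimits (tensorLeft A)] :
    IsZero (((Tor C (n + 1)).obj A).obj B) := by
  let P := projectiveResolution B
  have hP : (P.complex.sc (n + 1)).Exact := P.complex_exactAt_succ n
  refine IsZero.of_iso ?_ (P.isoLeftDerivedObj (tensorLeft A) (n + 1))
  exact HomologicalComplex.ExactAt.isZero_homology (hP.map (tensorLeft A))

/-- `Tor₀(A, B)` is `A ⊗ B` as soon as `A ⊗ -` is right exact. -/
def torZeroIso (A B : C) [PreservesFiniteColimits (tensorLeft A)] :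
    ((Tor C 0).obj A).obj B ≅ A ⊗ B :=
  ((tensorLeft A).leftDerivedZeroIsoSelf).app B

/-- `Tor(A, B)` computed from a projective resolution of the second argument. -/
def torIso (A : C) {B : C} (P : ProjectiveResolution B) (n : ℕ) :
    ((Tor C n).obj A).obj B ≅ ((tensorComplex P.complex).obj A).homology n :=
  P.isoLeftDerivedObj (tensorLeft A) n

variable (Q : ObjectProperty C)

lemma prop_tor_zero_of_epi [Q.IsClosedUnderQuotients] {A A' : C} (f : A ⟶ A') [Epi f] (B : C)
    [PreservesFiniteColimits (tensorLeft A)] [PreservesFiniteColimits (tensorLeft A')]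
    [PreservesFiniteColimits (tensorRight B)] (h : Q (((Tor C 0).obj A).obj B)) :
    Q (((Tor C 0).obj A').obj B) := by
  have : Epi (f ▷ B) := (tensorRight B).map_epi f
  exact Q.prop_of_iso (torZeroIso A' B).symm
    (Q.prop_of_epi (f ▷ B) (Q.prop_of_iso (torZeroIso A B) h))

variable [Q.IsSerreClass] [∀ A : C, PreservesFiniteColimits (tensorRight A)] {S : ShortComplex C}

lemma prop_tor_X₂_of_shortExact
    (hproj : ∀ (P : C) [Projective P], PreservesFiniteLimits (tensorRight P))
    (hS : S.ShortExact) (B : C) (n : ℕ)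
    (h₁ : Q (((Tor C n).obj S.X₁).obj B)) (h₃ : Q (((Tor C n).obj S.X₃).obj B)) :
    Q (((Tor C n).obj S.X₂).obj B) := by
  let P := projectiveResolution B
  have (i : ℕ) := hproj (P.complex.X i)
  have hSP := shortExact_map_tensorComplex hS P.complex
  refine Q.prop_of_iso (torIso S.X₂ P n).symm (Q.prop_X₂_of_exact (hSP.homology_exact₂ n) ?_ ?_)
  · exact Q.prop_of_iso (torIso S.X₁ P n) h₁
  · exact Q.prop_of_iso (torIso S.X₃ P n) h₃

lemma prop_tor_succ_X₃_of_shortExact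
    (hproj : ∀ (P : C) [Projective P], PreservesFiniteLimits (tensorRight P))
    (hS : S.ShortExact) (B : C) (n : ℕ)
    (h₂ : Q (((Tor C (n + 1)).obj S.X₂).obj B)) (h₁ : Q (((Tor C n).obj S.X₁).obj B)) :
    Q (((Tor C (n + 1)).obj S.X₃).obj B) := by
  let P := projectiveResolution B
  have (i : ℕ) := hproj (P.complex.X i)
  have hSP := shortExact_map_tensorComplex hS P.complex
  refine Q.prop_of_iso (torIso S.X₃ P (n + 1)).symm
    (Q.prop_X₂_of_exact (hSP.homology_exact₃ (n + 1) n (by simp)) ?_ ?_)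
  · exact Q.prop_of_iso (torIso S.X₂ P (n + 1)) h₂
  · exact Q.prop_of_iso (torIso S.X₁ P n) h₁

end Tor

section Rep

variable {k G : Type u} [CommRing k] [Group G]

lemma rep_comp_eq_zero {A B C : Rep.{u} k G} {f : A ⟶ B} {g : B ⟶ C}
    (h : ∀ a, g.hom (f.hom a) = 0) : f ≫ g = 0 :=
  Rep.hom_ext <| Representation.IntertwiningMap.ext <| LinearMap.ext h

lemma rep_exact_iff {S : ShortComplex (Rep.{u} k G)} :
    S.Exact ↔ Function.Exact S.f.hom S.g.hom :=
  (S.exact_map_iff_of_faithful (forget₂ (Rep.{u} k G) (ModuleCat.{u} k))).symm.trans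
    (ShortComplex.ShortExact.moduleCat_exact_iff_function_exact _)

lemma preservesFiniteLimits_tensorRight (P : Rep.{u} k G) [Module.Flat k P] :
    PreservesFiniteLimits (tensorRight P) := by
  refine (tensorRight P).preservesFiniteLimits_iff_forall_exact_map_and_mono.2 fun S hS => ⟨?_, ?_⟩
  · exact hS.exact.map_of_epi_of_preservesCokernel _ hS.epi_g inferInstance
  · exact (Rep.mono_iff_injective _).2 (Module.Flat.rTensor_preserves_injective_linearMap (M := P)
      S.f.hom.toLinearMap ((Rep.mono_iff_injective _).1 hS.mono_f))

lemma preservesFiniteLimits_tensorLeft (P : Rep.{u} k G) [Module.Flat k P] :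
    PreservesFiniteLimits (tensorLeft P) :=
  have := preservesFiniteLimits_tensorRight P
  preservesFiniteLimits_of_natIso (BraidedCategory.tensorLeftIsoTensorRight P).symm

lemma flat_of_projective (P : Rep.{u} k G) [Projective P] : Module.Flat k P := by
  let q : Rep.free k G P ⟶ P := Rep.freeLift k G (A := P) fun x : P => x
  have hq : Function.Surjective q.hom := fun x =>
    ⟨Finsupp.single x (MonoidAlgebra.single 1 1), by simp [q]⟩
  have : Epi q := (Rep.epi_iff_surjective q).2 hq
  let s : P ⟶ Rep.free k G P := Projective.factorThru (𝟙 P) q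
  have hs : s ≫ q = 𝟙 P := Projective.factorThru_comp _ _
  have : Module.Flat k (Rep.free k G P) := inferInstanceAs (Module.Flat k (P →₀ MonoidAlgebra k G))
  exact .of_retract (M := Rep.free k G P) s.hom.toLinearMap q.hom.toLinearMap
    (congrArg (fun f => f.hom.toLinearMap) hs)

lemma preservesFiniteLimits_tensorRight_of_projective (P : Rep.{u} k G) [Projective P] :
    PreservesFiniteLimits (tensorRight P) :=
  have := flat_of_projective P
  preservesFiniteLimits_tensorRight P

/-- The permutation module `k[A]` on the underlying set of `A`, a free `k`-module which covers `A`
and is finitely generated if `A` is finite. -/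
def permutationRep (A : Rep.{u} k G) : Rep.{u} k G :=
  .of (X := A →₀ k)
    { toFun g := Finsupp.lmapDomain k k (A.ρ g)
      map_one' := by ext; simp
      map_mul' g h := by ext; simp }

/-- The canonical epimorphism `k[A] ⟶ A`. -/
def permutationCover (A : Rep.{u} k G) : permutationRep A ⟶ A :=
  Rep.ofHom (ρ := (permutationRep A).ρ) (σ := A.ρ)
    { toLinearMap := Finsupp.linearCombination k (fun x : A => x)
      isIntertwining' g := Finsupp.lhom_ext fun a b => by
        change Finsupp.linearCombination k (fun x : A => x)
          (Finsupp.mapDomain (A.ρ g) (Finsupp.single a b)) =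
          A.ρ g (Finsupp.linearCombination k (fun x : A => x) (Finsupp.single a b))
        simp }

instance (A : Rep.{u} k G) : Epi (permutationCover A) :=
  (Rep.epi_iff_surjective _).2 (Finsupp.linearCombination_id_surjective k A)

end Rep

section MemC

variable {G : Type} [Group G] {π : Set ℕ}

namespace NiceRep

lemma permutationRep (A : Rep.{0} ℤ G) [Finite A] : NiceRep π (permutationRep A) :=
  niceRep_iff.2 (IsNice.of_finite (A := A →₀ ℤ))

lemma of_mono {A B : Rep.{0} ℤ G} (hB : NiceRep π B) (f : A ⟶ B) [Mono f] : NiceRep π A :=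
  niceRep_iff.2 ((niceRep_iff.1 hB).of_injective (.mk' f.hom fun _ _ => map_add _ _ _)
    ((Rep.mono_iff_injective f).1 ‹_›))

lemma tensor {A B : Rep.{0} ℤ G} (hA : NiceRep π A) (hB : NiceRep π B) : NiceRep π (A ⊗ B) :=
  niceRep_iff.2 (@IsNice.tensorProduct π A B _ _ A.hV2 B.hV2 (niceRep_iff.1 hA) (niceRep_iff.1 hB))

lemma preservesFiniteLimits_tensorLeft {A : Rep.{0} ℤ G} (hA : NiceRep π A) :
    PreservesFiniteLimits (tensorLeft A) :=
  have : @Module.Flat ℤ A _ _ A.hV2 := (@flat_int_iff A _ A.hV2).2 hA.1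
  _root_.preservesFiniteLimits_tensorLeft A

end NiceRep

namespace MemC

lemma of_epi {A B : Rep.{0} ℤ G} (hA : MemC G π A) (f : A ⟶ B) [Epi f] : MemC G π B :=
  quot A B f ((Rep.epi_iff_surjective f).1 ‹_›) hA

lemma of_shortExact {S : ShortComplex (Rep.{0} ℤ G)} (hS : S.ShortExact) (h₁ : MemC G π S.X₁)
    (h₃ : MemC G π S.X₃) : MemC G π S.X₂ :=
  ext _ _ _ S.f S.g ((Rep.mono_iff_injective _).1 hS.mono_f)
    ((Rep.epi_iff_surjective _).1 hS.epi_g) (rep_exact_iff.1 hS.exact) h₁ h₃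

@[elab_as_elim]
lemma induction_niceRep {motive : ∀ A : Rep.{0} ℤ G, MemC G π A → Prop}
    (nice : ∀ A hA, motive A (of_nice A hA))
    (quot : ∀ {A B : Rep.{0} ℤ G} (f : A ⟶ B) [Epi f] (hA : MemC G π A),
      motive A hA → motive B (hA.of_epi f))
    (ext : ∀ {S : ShortComplex (Rep.{0} ℤ G)} (hS : S.ShortExact) (h₁ : MemC G π S.X₁)
      (h₃ : MemC G π S.X₃), motive S.X₁ h₁ → motive S.X₃ h₃ → motive S.X₂ (of_shortExact hS h₁ h₃))
    {A : Rep.{0} ℤ G} (hA : MemC G π A) : motive A hA := by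
  induction hA with
  | of_finite A h => exact quot (permutationCover A) _ (nice _ (.permutationRep A))
  | of_nice A h => exact nice A h
  | quot A B f hf hA ih =>
    have : Epi f := (Rep.epi_iff_surjective f).2 hf
    exact quot f hA ih
  | ext A B C f g hf hg hfg _ _ ihA ihC =>
    have hzero : f ≫ g = 0 := rep_comp_eq_zero fun a => (hfg _).2 ⟨a, rfl⟩
    have hS : (ShortComplex.mk f g hzero).ShortExact := .mk' (rep_exact_iff.2 hfg)
      ((Rep.mono_iff_injective f).2 hf) ((Rep.epi_iff_surjective g).2 hg)
    exact ext hS _ _ ihA ihC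

lemma of_mono {A B : Rep.{0} ℤ G} (hB : MemC G π B) (f : A ⟶ B) [Mono f] : MemC G π A := by
  induction hB using induction_niceRep generalizing A with
  | nice B hB => exact .of_nice A (hB.of_mono f)
  | quot q _ ih => exact (ih (pullback.fst q f)).of_epi (pullback.snd q f)
  | @ext S hS _ _ ih₁ ih₃ =>
    have := hS.mono_f
    let i : kernel (f ≫ S.g) ⟶ S.X₁ :=
      hS.exact.lift (kernel.ι (f ≫ S.g) ≫ f) (by rw [Category.assoc, kernel.condition])
    have : Mono i := mono_of_mono_fac (hS.exact.lift_f _ _)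
    exact of_shortExact (shortExact_kernel_image (f ≫ S.g)) (ih₁ i)
      (ih₃ (image.ι (f ≫ S.g)))

instance : ObjectProperty.IsSerreClass (MemC G π) where
  exists_zero := ⟨_, isZero_zero _,
    have := (Rep.isZero_iff ℤ G _).1 (isZero_zero (Rep.{0} ℤ G))
    .of_finite _ inferInstance⟩
  prop_of_mono f _ hB := hB.of_mono f
  prop_of_epi f _ hA := hA.of_epi f
  prop_X₂_of_shortExact := of_shortExact

end MemC

namespace NiceRep

variable {A B : Rep.{0} ℤ G}

lemma memC_tensor (hA : NiceRep π A) (hB : MemC G π B) : MemC G π (A ⊗ B) := by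
  induction hB using MemC.induction_niceRep with
  | nice B hB => exact .of_nice _ (hA.tensor hB)
  | quot f _ ih =>
    have : Epi (A ◁ f) := (tensorLeft A).map_epi f
    exact ih.of_epi (A ◁ f)
  | ext hS _ _ ih₁ ih₃ =>
    have := hA.preservesFiniteLimits_tensorLeft
    exact .of_shortExact (hS.map_of_exact (tensorLeft A)) ih₁ ih₃

lemma memC_tor (hA : NiceRep π A) (hB : MemC G π B) (n : ℕ) :
    MemC G π (((Tor (Rep ℤ G) n).obj A).obj B) := by
  cases n with
  | zero => exact ObjectProperty.prop_of_iso (MemC G π) (torZeroIso A B).symm (hA.memC_tensor hB)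
  | succ n =>
    have := hA.preservesFiniteLimits_tensorLeft
    exact ObjectProperty.prop_of_isZero (MemC G π)
      (isZero_tor_succ_of_preservesFiniteLimits A B n)

end NiceRep

end MemC

/-- Let `G` be a group and `π` a set of primes.  If `A` and `B` belong to
`𝔠(G, π)`, then `Tor_n^ℤ(A, B)`, with the diagonal `G`-action, belongs to
`𝔠(G, π)` for all `n ≥ 0`. -/
theorem memC_tor (G : Type) [Group G] (π : Set ℕ) (A B : Rep ℤ G)
    (hA : MemC G π A) (hB : MemC G π B) (n : ℕ) :
    MemC G π (((Tor (Rep ℤ G) n).obj A).obj B) := by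
  have hproj (P : Rep ℤ G) [Projective P] := preservesFiniteLimits_tensorRight_of_projective P
  induction n generalizing A with
  | zero =>
    induction hA using MemC.induction_niceRep with
    | nice A hA => exact hA.memC_tor hB 0
    | quot f _ ih => exact prop_tor_zero_of_epi _ f B ih
    | ext hS _ _ ih₁ ih₃ => exact prop_tor_X₂_of_shortExact _ hproj hS B 0 ih₁ ih₃
  | succ n ih =>
    induction hA using MemC.induction_niceRep with
    | nice A hA => exact hA.memC_tor hB (n + 1)
    | quot f hA ihA =>
      have hker : MemC G π (kernel f) := hA.of_mono (kernel.ι f)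
      exact prop_tor_succ_X₃_of_shortExact _ hproj (shortExact_kernel_of_epi f) B n ihA (ih _ hker)
    | ext hS _ _ ih₁ ih₃ => exact prop_tor_X₂_of_shortExact _ hproj hS B (n + 1) ih₁ ih₃
end
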